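/- arXiv:0809.0033 — 2 statements merged into one kernel-verified Lean document; each statement's English description precedes it below -/
import Mathlib

section
/- Let f : M(p,ℂ) → ℂ be a linear function on p×p complex matrices, f(M) = Σ_{i,j} a_{ij} m_{ij}, which is not a trace multiple (i.e., it is not the case that a_{ij} = 0 for all i ≠ j and all diagonal coefficients a_{ii} are equal). Let X ∈ SU(p) be a non-central matrix. Then f is not constant on the conjugacy class {U X U⁻¹ : U ∈ SU(p)}. -/
open Matrix

section UnitaryConjugation

open scoped ComplexOrder

variable {n : Type*} [Fintype n] [DecidableEq n]

/-- A linear map that is constant on the unitary conjugacy class of `X` kills the commutator of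
`X` with any Hermitian involution. -/
theorem map_commutator_involution_eq_zero {E : Type*} [AddCommGroup E] [Module ℂ E]
    (L : Matrix n n ℂ →ₗ[ℂ] E) (X : Matrix n n ℂ)
    (h : ∀ U ∈ unitaryGroup n ℂ, L (U * X * star U) = L X)
    (H : Matrix n n ℂ) (hH : star H = H) (hHH : H * H = 1) : L (H * X - X * H) = 0 := by
  have h₁ : L (H * X * H) = L X := by
    simpa [hH] using h H (by rw [mem_unitaryGroup_iff, hH, hHH])
  obtain ⟨s, hss, hstar⟩ : ∃ s : ℂ, s * s = 1 / 2 ∧ star s = s := by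
    refine ⟨((Real.sqrt 2)⁻¹ : ℝ), ?_, Complex.conj_ofReal _⟩
    rw [← Complex.ofReal_mul, ← mul_inv, Real.mul_self_sqrt (by norm_num)]
    norm_num
  have hI : star Complex.I = -Complex.I := Complex.conj_I
  have hV : star (s • (1 + Complex.I • H)) = s • (1 - Complex.I • H) := by
    simp only [star_smul, star_add, star_one, hstar, hI, hH, neg_smul, sub_eq_add_neg]
  have hmem : s • (1 + Complex.I • H) ∈ unitaryGroup n ℂ := by
    rw [mem_unitaryGroup_iff, hV, smul_mul_smul_comm, hss]
    simp only [add_mul, mul_sub, one_mul, mul_one, smul_mul_smul_comm, hHH, Complex.I_mul_I]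
    module
  have h₂ := h _ hmem
  have hexp : s • (1 + Complex.I • H) * X * (s • (1 - Complex.I • H)) =
      (1 / 2 : ℂ) • (X + H * X * H + Complex.I • (H * X - X * H)) := by
    rw [smul_mul_assoc, smul_mul_smul_comm, hss]
    simp only [add_mul, mul_sub, one_mul, mul_one, smul_mul_assoc, mul_smul_comm, smul_smul,
      smul_add, smul_sub, mul_assoc, Complex.I_mul_I]
    module
  rw [hV, hexp, map_smul, map_add, map_add, h₁, map_smul] at h₂
  have h₃ : (Complex.I / 2) • L (H * X - X * H) = 0 := by
    have := sub_eq_zero.mpr h₂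
    rw [← this]
    module
  simpa using h₃

/-- A linear map that is constant on the unitary conjugacy class of `X` kills the commutator of
`X` with any positive matrix of rank one. -/
theorem map_commutator_vecMulVec_star_eq_zero {E : Type*} [AddCommGroup E] [Module ℂ E]
    (L : Matrix n n ℂ →ₗ[ℂ] E) (X : Matrix n n ℂ)
    (h : ∀ U ∈ unitaryGroup n ℂ, L (U * X * star U) = L X) (v : n → ℂ) :
    L (vecMulVec v (star v) * X - X * vecMulVec v (star v)) = 0 := by
  rcases eq_or_ne v 0 with rfl | hv
  · simp
  set Q := vecMulVec v (star v) with hQ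
  set t : ℂ := star v ⬝ᵥ v with ht
  have ht0 : t ≠ 0 := by rwa [ht, ne_eq, dotProduct_star_self_eq_zero]
  have hQs : star Q = Q := by
    rw [hQ, star_eq_conjTranspose, conjTranspose_vecMulVec, star_star]
  have hts : star t = t := by
    rw [ht, ← star_dotProduct]
  have hQQ : Q * Q = t • Q := by
    rw [hQ, vecMulVec_mul_vecMulVec, ← ht]
    ext i j
    simp only [vecMulVec_apply, Matrix.smul_apply, Pi.smul_apply, smul_eq_mul]
    ring
  have key := map_commutator_involution_eq_zero L X h (1 - (2 * t⁻¹) • Q)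
    (by simp [star_sub, star_smul, hQs, hts, star_inv₀])
    (by
      simp only [sub_mul, mul_sub, one_mul, mul_one, smul_mul_smul_comm, hQQ, smul_smul]
      have : 2 * t⁻¹ * (2 * t⁻¹) * t = 4 * t⁻¹ := by field_simp; norm_num
      rw [this]
      module)
  have hexp : (1 - (2 * t⁻¹) • Q) * X - X * (1 - (2 * t⁻¹) • Q) =
      (-(2 * t⁻¹)) • (Q * X - X * Q) := by
    simp only [sub_mul, mul_sub, one_mul, mul_one, smul_mul_assoc, mul_smul_comm]
    module
  rw [hexp, map_smul] at key
  simpa [ht0] using key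

/-- A linear map that is constant on the unitary conjugacy class of `X` kills every commutator
with `X`. -/
theorem map_commutator_eq_zero {E : Type*} [AddCommGroup E] [Module ℂ E]
    (L : Matrix n n ℂ →ₗ[ℂ] E) (X : Matrix n n ℂ)
    (h : ∀ U ∈ unitaryGroup n ℂ, L (U * X * star U) = L X) (M : Matrix n n ℂ) :
    L (M * X - X * M) = 0 := by
  let D : Matrix n n ℂ →ₗ[ℂ] E :=
    L ∘ₗ (LinearMap.mulRight ℂ X - LinearMap.mulLeft ℂ X)
  have hD (v : n → ℂ) : D (vecMulVec v (star v)) = 0 :=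
    map_commutator_vecMulVec_star_eq_zero L X h v
  have hI : star Complex.I = -Complex.I := Complex.conj_I
  have hpol (v w : n → ℂ) : vecMulVec v (star w) = (1 / 4 : ℂ) •
      (vecMulVec (v + w) (star (v + w)) - vecMulVec (v - w) (star (v - w)) +
        Complex.I • vecMulVec (v + Complex.I • w) (star (v + Complex.I • w)) -
        Complex.I • vecMulVec (v - Complex.I • w) (star (v - Complex.I • w))) := by
    ext i j
    simp only [vecMulVec_apply, Matrix.smul_apply, Matrix.add_apply, Matrix.sub_apply,
      Pi.star_apply, Pi.add_apply, Pi.sub_apply, Pi.smul_apply, smul_eq_mul, star_add, star_sub,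
      star_mul', hI]
    linear_combination ((v i * star (w j) - w i * star (v j)) / 2) * Complex.I_mul_I
  have hD' (v w : n → ℂ) : D (vecMulVec v (star w)) = 0 := by
    rw [hpol]
    simp only [map_smul, map_add, map_sub, hD, smul_zero, sub_zero, add_zero]
  change D M = 0
  rw [matrix_eq_sum_single M]
  simp only [map_sum]
  refine Finset.sum_eq_zero fun i _ => Finset.sum_eq_zero fun j _ => ?_
  have : single i j (M i j) = vecMulVec (M i j • Pi.single i 1) (star (Pi.single j (1 : ℂ))) := by
    ext k l
    simp [vecMulVec_apply, single_apply, Pi.single_apply]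
    grind
  rw [this, hD']

/-- If `[B, [M, X]] = 0` for all `M`, then the entries of `B` and `X`
satisfy the relations obtained from elementary matrices `M`. -/
theorem apply_of_double_commutator_eq_zero {B X : Matrix n n ℂ}
    (h : ∀ M : Matrix n n ℂ, B * (M * X - X * M) - (M * X - X * M) * B = 0) (i j k l : n) :
    B i k * X l j - (if l = j then (B * X) i k else 0) - (if i = k then (X * B) l j else 0)
      + X i k * B l j = 0 := by
  have h₁ : B * single k l 1 * X - B * X * single k l 1 - single k l 1 * (X * B)
      + X * single k l 1 * B = 0 := by
    rw [← h (single k l 1)]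
    noncomm_ring
  have h₂ := congrFun (congrFun h₁ i) j
  simpa [Matrix.mul_apply, single_apply, Finset.sum_ite_eq, ite_and, mul_ite, ite_mul,
    eq_comm] using h₂

/-- If `[B, [M, X]] = 0` for all `M` and `X` has a nonzero off-diagonal entry, then `B` is
scalar. -/
theorem scalar_of_double_commutator_of_off_diagonal {B X : Matrix n n ℂ}
    (h : ∀ M : Matrix n n ℂ, B * (M * X - X * M) - (M * X - X * M) * B = 0)
    {i k : n} (hik : i ≠ k) (hX : X i k ≠ 0) :
    (∀ l j, l ≠ j → B l j = 0) ∧ ∀ l j, B l l = B j j := by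
  have hB : B i k = 0 := by
    have := apply_of_double_commutator_eq_zero h i k k i
    simp only [hik, if_false] at this
    have h₂ : X i k * B i k = 0 := by linear_combination this / 2
    exact (mul_eq_zero.mp h₂).resolve_left hX
  have hoff (l j : n) (hlj : l ≠ j) : B l j = 0 := by
    have := apply_of_double_commutator_eq_zero h i j k l
    simpa [hik, hlj, hB, hX] using this
  refine ⟨hoff, fun l j => ?_⟩
  have hl := apply_of_double_commutator_eq_zero h i l k l
  have hj := apply_of_double_commutator_eq_zero h i j k j
  simp only [hik, hB, if_true, if_false] at hl hj
  exact mul_left_cancel₀ hX (by linear_combination hl - hj)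

/-- If `B` commutes with `X` and with every `[M, X]`, then one of `B`, `X` is scalar. -/
theorem scalar_or_scalar_of_double_commutator {B X : Matrix n n ℂ} (hBX : B * X = X * B)
    (h : ∀ M : Matrix n n ℂ, B * (M * X - X * M) - (M * X - X * M) * B = 0) :
    ((∀ i j, i ≠ j → B i j = 0) ∧ ∀ i j, B i i = B j j) ∨
      ((∀ i j, i ≠ j → X i j = 0) ∧ ∀ i j, X i i = X j j) := by
  by_cases hXd : ∀ i j, i ≠ j → X i j = 0
  swap
  · push Not at hXd
    obtain ⟨i, k, hik, hX⟩ := hXd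
    exact Or.inl (scalar_of_double_commutator_of_off_diagonal h hik hX)
  by_cases hBd : ∀ i j, i ≠ j → B i j = 0
  swap
  · push Not at hBd
    obtain ⟨i, k, hik, hB⟩ := hBd
    refine Or.inr (scalar_of_double_commutator_of_off_diagonal (fun M => ?_) hik hB)
    have e : X * (M * B - B * M) - (M * B - B * M) * X =
        (B * (M * X - X * M) - (M * X - X * M) * B) + M * (X * B - B * X)
          + (B * X - X * B) * M := by
      noncomm_ring
    rw [e, h, hBX]
    simp
  have hdiag {A C : Matrix n n ℂ} (hA : ∀ i j, i ≠ j → A i j = 0) (i : n) :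
      (A * C) i i = A i i * C i i := by
    rw [Matrix.mul_apply]
    exact Finset.sum_eq_single i (fun j _ hj => by rw [hA i j hj.symm, zero_mul]) (by simp)
  have hpair (i l : n) : B i i = B l l ∨ X l l = X i i := by
    have := apply_of_double_commutator_eq_zero h i l i l
    simp only [if_true, hdiag hBd, hdiag hXd] at this
    rw [← sub_eq_zero, ← sub_eq_zero (a := X l l), ← mul_eq_zero]
    linear_combination this
  by_cases hXe : ∀ i j, X i i = X j j
  · exact Or.inr ⟨hXd, hXe⟩
  · push Not at hXe
    obtain ⟨i, j, hij⟩ := hXe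
    have hBi (k : n) : B k k = B i i := by grind [hpair i j, hpair i k, hpair k j]
    exact Or.inl ⟨hBd, fun k l => by rw [hBi k, hBi l]⟩

/-- If `U ↦ tr (B U X U⋆)` is constant on the unitary group, then one of `B`, `X` is scalar. -/
theorem scalar_or_scalar_of_trace_unitary_conj_eq {B X : Matrix n n ℂ}
    (h : ∀ U ∈ unitaryGroup n ℂ, (B * (U * X * star U)).trace = (B * X).trace) :
    ((∀ i j, i ≠ j → B i j = 0) ∧ ∀ i j, B i i = B j j) ∨
      ((∀ i j, i ≠ j → X i j = 0) ∧ ∀ i j, X i i = X j j) := by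
  have hcomm (V : Matrix n n ℂ) (hV : V ∈ unitaryGroup n ℂ) :
      B * (V * X * star V) = V * X * star V * B := by
    have key := map_commutator_eq_zero (traceLinearMap n ℂ ℂ ∘ₗ LinearMap.mulLeft ℂ B)
      (V * X * star V) (fun U hU => by
        have := h (U * V) (mul_mem hU hV)
        rw [← h V hV, star_mul] at this
        simpa [mul_assoc] using this)
    generalize V * X * star V = Y at key ⊢
    rw [← sub_eq_zero, ← neg_eq_zero, neg_sub, ext_iff_trace_mul_left]
    intro M
    have hM := key M
    simp only [LinearMap.comp_apply, LinearMap.mulLeft_apply, traceLinearMap_apply, mul_sub,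
      trace_sub] at hM
    rw [mul_sub, trace_sub, mul_zero, trace_zero, ← hM, ← mul_assoc B M,
      trace_mul_cycle B M, trace_mul_comm M, trace_mul_comm M, ← mul_assoc B]
  have hBX : B * X = X * B := by simpa using hcomm 1 (one_mem _)
  refine scalar_or_scalar_of_double_commutator hBX fun M => ?_
  refine map_commutator_eq_zero (LinearMap.mulLeft ℂ B - LinearMap.mulRight ℂ B) X
    (fun U hU => ?_) M
  simp [hcomm U hU, hBX]

/-- Every unitary matrix is a unit scalar times a special unitary one. -/
theorem exists_smul_mem_unitaryGroup_det_eq_one {U : Matrix n n ℂ} (hU : U ∈ unitaryGroup n ℂ) :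
    ∃ c : ℂ, c * star c = 1 ∧ c • U ∈ unitaryGroup n ℂ ∧ (c • U).det = 1 := by
  rcases isEmpty_or_nonempty n with hn | hn
  · exact ⟨1, by simp, by simpa using hU, by simp⟩
  have hdet : U.det * star U.det = 1 := by
    rw [← det_conjTranspose, ← star_eq_conjTranspose, ← det_mul, mem_unitaryGroup_iff.mp hU,
      det_one]
  obtain ⟨c, hc⟩ := IsAlgClosed.exists_pow_nat_eq (star U.det) (Fintype.card_pos (α := n))
  have hcc : c * star c = 1 := by
    have hnorm : ‖c‖ = 1 := by
      rw [← pow_eq_one_iff_of_nonneg (norm_nonneg c) (Fintype.card_ne_zero (α := n)),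
        ← norm_pow, hc, norm_star]
      have := congrArg norm hdet
      rw [norm_mul, norm_star, norm_one] at this
      nlinarith [norm_nonneg U.det]
    have := Complex.mul_conj' c
    rw [hnorm] at this
    simpa using this
  refine ⟨c, hcc, ?_, ?_⟩
  · rw [mem_unitaryGroup_iff, star_smul, smul_mul_smul_comm, hcc, mem_unitaryGroup_iff.mp hU,
      one_smul]
  · rw [det_smul, hc, mul_comm, hdet]

end UnitaryConjugation

/-- A linear function `f(M) = Σ aᵢⱼ mᵢⱼ` on `p × p` complex matrices that is not a trace
multiple is not constant on the `SU(p)`-conjugacy class of any non-central `X ∈ SU(p)`. -/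
theorem stmt7 (p : ℕ) (a : Matrix (Fin p) (Fin p) ℂ)
    (hna : ¬ ((∀ i j, i ≠ j → a i j = 0) ∧ (∀ i j, a i i = a j j)))
    (X : Matrix (Fin p) (Fin p) ℂ)
    (hXU : X ∈ Matrix.unitaryGroup (Fin p) ℂ) (hXdet : X.det = 1)
    (hX : ¬ ∃ c : ℂ, X = c • (1 : Matrix (Fin p) (Fin p) ℂ)) :
    ∃ U : Matrix (Fin p) (Fin p) ℂ, U ∈ Matrix.unitaryGroup (Fin p) ℂ ∧ U.det = 1 ∧
      (∑ i, ∑ j, a i j * (U * X * star U) i j) ≠ ∑ i, ∑ j, a i j * X i j := by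
  by_contra! hconst
  have htr (M : Matrix (Fin p) (Fin p) ℂ) : (aᵀ * M).trace = ∑ i, ∑ j, a i j * M i j := by
    rw [trace, Finset.sum_comm]
    simp [Matrix.mul_apply]
  have hinv : ∀ U ∈ Matrix.unitaryGroup (Fin p) ℂ,
      (aᵀ * (U * X * star U)).trace = (aᵀ * X).trace := by
    intro U hU
    obtain ⟨c, hc, hmem, hdet⟩ := exists_smul_mem_unitaryGroup_det_eq_one hU
    have := hconst _ hmem hdet
    rw [← htr, ← htr, star_smul, smul_mul_assoc, smul_mul_smul_comm, hc, one_smul] at this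
    exact this
  rcases scalar_or_scalar_of_trace_unitary_conj_eq hinv with ⟨hoff, hdiag⟩ | ⟨hoff, hdiag⟩
  · exact hna ⟨fun i j hij => hoff j i hij.symm, hdiag⟩
  · rcases isEmpty_or_nonempty (Fin p) with hp | ⟨⟨i₀⟩⟩
    · exact hX ⟨0, Subsingleton.elim _ _⟩
    · refine hX ⟨X i₀ i₀, ?_⟩
      ext i j
      rcases eq_or_ne i j with rfl | hij
      · simp [hdiag i i₀]
      · simp [hoff i j hij, hij]
end

section
/- Let ρ be a unitary representation of a group G on a finite-dimensional complex vector space V, and let τ_1,…,τ_k be generators of G such that for each i, no two distinct eigenvalues of ρ(τ_i) differ multiplicatively by a root of unity. Then for every nonzero integer m, a subspace W ⊆ V is invariant under all ρ(τ_i^m) if and only if it is invariant under all ρ(τ_i). In particular, ρ is irreducible if and only if its restriction to the subgroup generated by τ_1^m, …, τ_k^m is irreducible. -/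
section

variable {V : Type*} [NormedAddCommGroup V] [InnerProductSpace ℂ V] [FiniteDimensional ℂ V]

theorem LinearIsometryEquiv.symm_apply_mem_of_forall_apply_mem (e : V ≃ₗᵢ[ℂ] V)
    {W : Submodule ℂ V} (h : ∀ w ∈ W, e w ∈ W) : ∀ w ∈ W, e.symm w ∈ W := by
  have hmap : W.map (e.toLinearEquiv : V →ₗ[ℂ] V) = W :=
    Submodule.eq_of_le_of_finrank_eq (Submodule.map_le_iff_le_comap.mpr h)
      (LinearEquiv.finrank_map_eq e.toLinearEquiv W)
  intro w hw
  rw [← hmap] at hw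
  obtain ⟨v, hv, rfl⟩ := hw
  simpa using hv

theorem LinearIsometryEquiv.isSemisimple (e : V ≃ₗᵢ[ℂ] V) :
    Module.End.IsSemisimple (e.toLinearEquiv : V →ₗ[ℂ] V) := by
  rw [Module.End.isSemisimple_iff]
  intro W hW
  refine ⟨Wᗮ, fun v hv => ?_, W.isCompl_orthogonal⟩
  refine (Submodule.mem_orthogonal W _).mpr fun u hu => ?_
  have h := e.symm_apply_mem_of_forall_apply_mem (W := W) hW u hu
  have horth := (Submodule.mem_orthogonal W v).mp hv _ h
  rw [← e.inner_map_map, e.apply_symm_apply] at horth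
  exact horth

/-- If taking `n`-th powers is injective on the eigenvalues of a diagonalizable endomorphism `f`,
then `f` is a polynomial in `f ^ n`. -/
theorem Module.End.IsSemisimple.exists_aeval_pow_eq {K M : Type*} [Field K] [IsAlgClosed K]
    [AddCommGroup M] [Module K M] [FiniteDimensional K M] {f : Module.End K M}
    (hf : f.IsSemisimple) {n : ℕ} (hn : Set.InjOn (fun a : K => a ^ n) {a | f.HasEigenvalue a}) :
    ∃ p : Polynomial K, Polynomial.aeval (f ^ n) p = f := by
  classical
  have hfin : {a | f.HasEigenvalue a}.Finite := f.finite_hasEigenvalue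
  refine ⟨Lagrange.interpolate hfin.toFinset (fun a => a ^ n) id, ?_⟩
  have htop : ⨆ a, f.eigenspace a = ⊤ := by
    rw [← f.iSup_maxGenEigenspace_eq_top]
    exact iSup_congr fun a => (hf.isFinitelySemisimple.maxGenEigenspace_eq_eigenspace a).symm
  refine LinearMap.ext fun v => ?_
  have hv : v ∈ ⨆ a, f.eigenspace a := htop ▸ Submodule.mem_top
  induction hv using Submodule.iSup_induction' with
  | zero => simp
  | add x y _ _ hx hy => rw [map_add, map_add, hx, hy]
  | mem a x hx =>
    by_cases hx0 : x = 0
    · simp [hx0]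
    have hvec : f.HasEigenvector a x := ⟨hx, hx0⟩
    have hpow : (f ^ n).HasEigenvector (a ^ n) x :=
      ⟨Module.End.mem_eigenspace_iff.mpr (hvec.pow_apply n), hx0⟩
    rw [Module.End.aeval_apply_of_hasEigenvector hpow, hvec.apply_eq_smul,
      Lagrange.eval_interpolate_at_node (v := fun a : K => a ^ n) id (by simpa using hn)
        (hfin.mem_toFinset.mpr (Module.End.hasEigenvalue_of_hasEigenvector hvec)), id]

theorem LinearIsometryEquiv.apply_mem_of_forall_pow_apply_mem (e : V ≃ₗᵢ[ℂ] V) {n : ℕ}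
    (hn : 0 < n)
    (he : ∀ lam mu : ℂ, Module.End.HasEigenvalue (e.toLinearEquiv : V →ₗ[ℂ] V) lam →
      Module.End.HasEigenvalue (e.toLinearEquiv : V →ₗ[ℂ] V) mu → lam ≠ mu → (lam / mu) ^ n ≠ 1)
    {W : Submodule ℂ V} (h : ∀ w ∈ W, (e ^ n) w ∈ W) : ∀ w ∈ W, e w ∈ W := by
  obtain ⟨p, hp⟩ := e.isSemisimple.exists_aeval_pow_eq (n := n) <| by
    intro a ha b hb hab
    by_contra hne
    refine he a b ha hb hne ?_
    have hb0 : b ≠ 0 := by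
      rintro rfl
      exact hne (pow_eq_zero_iff hn.ne' |>.mp (by simpa [hn.ne'] using hab))
    rw [div_pow, div_eq_one_iff_eq (pow_ne_zero n hb0)]
    exact hab
  have hpow : ∀ v, ((e.toLinearEquiv : Module.End ℂ V) ^ n) v = (e ^ n) v := by
    intro v
    rw [Module.End.pow_apply]
    clear hn he h hp
    induction n with
    | zero => rfl
    | succ n ih =>
      rw [Function.iterate_succ_apply', ih, pow_succ']
      rfl
  have hW : W ≤ W.comap ((e.toLinearEquiv : Module.End ℂ V) ^ n) := by
    intro w hw
    rw [Submodule.mem_comap, hpow]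
    exact h w hw
  intro w hw
  have key := Polynomial.aeval_apply_smul_mem_of_le_comap hw p _ hW
  rw [hp] at key
  exact key

end

/-- If `τ₁, …, τ_k` generate `G` and, for a unitary representation `ρ`, no two distinct
eigenvalues of any `ρ(τᵢ)` differ multiplicatively by a root of unity, then for any
integer `m ≠ 0` a subspace is invariant under all `ρ(τᵢᵐ)` iff it is invariant under all
`ρ(τᵢ)`; in particular `ρ` is irreducible iff its restriction to `⟨τ₁ᵐ, …, τ_kᵐ⟩` is. -/
theorem stmt10 {G : Type*} [Group G] {V : Type*} [NormedAddCommGroup V]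
    [InnerProductSpace ℂ V] [FiniteDimensional ℂ V] {k : ℕ}
    (ρ : G →* (V ≃ₗᵢ[ℂ] V)) (τ : Fin k → G)
    (hgen : Subgroup.closure (Set.range τ) = ⊤)
    (heig : ∀ (i : Fin k) (lam mu : ℂ),
      Module.End.HasEigenvalue ((ρ (τ i)).toLinearEquiv : V →ₗ[ℂ] V) lam →
      Module.End.HasEigenvalue ((ρ (τ i)).toLinearEquiv : V →ₗ[ℂ] V) mu →
      lam ≠ mu → ∀ r : ℕ, 0 < r → (lam / mu) ^ r ≠ 1)
    (m : ℤ) (hm : m ≠ 0) :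
    (∀ W : Submodule ℂ V,
      (∀ i : Fin k, ∀ w ∈ W, ρ (τ i ^ m) w ∈ W) ↔ (∀ i : Fin k, ∀ w ∈ W, ρ (τ i) w ∈ W)) ∧
    ((∀ W : Submodule ℂ V, (∀ g : G, ∀ w ∈ W, ρ g w ∈ W) → W = ⊥ ∨ W = ⊤) ↔
      (∀ W : Submodule ℂ V,
        (∀ g ∈ Subgroup.closure (Set.range fun i => τ i ^ m), ∀ w ∈ W, ρ g w ∈ W) →
          W = ⊥ ∨ W = ⊤)) := by
  have generated : ∀ (H : Set G) (W : Submodule ℂ V), (∀ g ∈ H, ∀ w ∈ W, ρ g w ∈ W) →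
      ∀ g ∈ Subgroup.closure H, ∀ w ∈ W, ρ g w ∈ W := by
    intro H W hW g hg
    induction hg using Subgroup.closure_induction with
    | mem x hx => exact hW x hx
    | one => simp
    | mul x y _ _ hx hy =>
      intro w hw
      rw [map_mul]
      exact hx _ (hy w hw)
    | inv x _ hx =>
      intro w hw
      rw [map_inv]
      exact LinearIsometryEquiv.symm_apply_mem_of_forall_apply_mem (ρ x) hx w hw
  have invariant_iff : ∀ W : Submodule ℂ V,
      (∀ i : Fin k, ∀ w ∈ W, ρ (τ i ^ m) w ∈ W) ↔ (∀ i : Fin k, ∀ w ∈ W, ρ (τ i) w ∈ W) := by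
    intro W
    refine ⟨fun h i => ?_, fun h i => ?_⟩
    · refine LinearIsometryEquiv.apply_mem_of_forall_pow_apply_mem (ρ (τ i)) (n := m.natAbs)
        (Int.natAbs_pos.mpr hm) (fun lam mu hl hmu hne => heig i lam mu hl hmu hne _
          (Int.natAbs_pos.mpr hm)) ?_
      rw [← map_pow]
      refine generated {τ i ^ m} W (by simpa using h i) _ ?_
      rcases Int.natAbs_eq m with hc | hc
      · rw [← zpow_natCast, ← hc]
        exact Subgroup.mem_closure_of_mem (Set.mem_singleton _)
      · rw [← inv_inv (τ i ^ m.natAbs), ← zpow_natCast, ← zpow_neg, ← hc]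
        exact inv_mem (Subgroup.mem_closure_of_mem (Set.mem_singleton _))
    · exact generated {τ i} W (by simpa using h i) _
        (zpow_mem (Subgroup.mem_closure_of_mem (Set.mem_singleton _)) m)
  refine ⟨invariant_iff, fun h W hW => h W fun g => ?_, fun h W hW => h W fun g _ => hW g⟩
  have hτ := (invariant_iff W).mp fun i =>
    hW _ (Subgroup.subset_closure (Set.mem_range_self i))
  exact generated (Set.range τ) W (by rintro _ ⟨i, rfl⟩; exact hτ i) g (hgen ▸ Subgroup.mem_top g)
end
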